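/- Compactness of minimizers (limit is a minimizer): let Ω ⊆ ℝⁿ be open and let (u_k) be a sequence of minimizers of J in Ω which is locally uniformly Lipschitz (for every compact K ⊆ ℝⁿ there is L such that every u_k is L-Lipschitz on K) and converges pointwise to a function u : ℝⁿ → ℝ. Then u is nonnegative, locally Lipschitz, and a minimizer of J in Ω. -/

import Mathlib

open MeasureTheory Metric Set Filter ENNReal NNReal

/-- The Alt–Caffarelli energy `J_D(u) = ∫_D (‖∇u‖² + 𝟙_{u>0})`, valued in `[0,∞]`. -/
noncomputable def JE {n : ℕ} (D : Set (EuclideanSpace ℝ (Fin n)))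
    (u : EuclideanSpace ℝ (Fin n) → ℝ) : ℝ≥0∞ :=
  ∫⁻ x in D, ((‖gradient u x‖₊ : ℝ≥0∞) ^ 2 + if 0 < u x then 1 else 0)

/-- `u` is a (nonnegative, locally Lipschitz) minimizer of `J` in the open set `Ω`:
for every nonnegative locally Lipschitz competitor `v` with `{v ≠ u}` a bounded subset
of `Ω`, one has `J_{Ω ∩ B}(u) ≤ J_{Ω ∩ B}(v)` for every open ball `B ⊇ {v ≠ u}`. -/
def IsMinimizer {n : ℕ} (Ω : Set (EuclideanSpace ℝ (Fin n)))
    (u : EuclideanSpace ℝ (Fin n) → ℝ) : Prop :=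
  (∀ x, 0 ≤ u x) ∧ LocallyLipschitz u ∧
  ∀ v : EuclideanSpace ℝ (Fin n) → ℝ, (∀ x, 0 ≤ v x) → LocallyLipschitz v →
    Bornology.IsBounded {x | v x ≠ u x} → {x | v x ≠ u x} ⊆ Ω →
    ∀ (c : EuclideanSpace ℝ (Fin n)) (r : ℝ), {x | v x ≠ u x} ⊆ Metric.ball c r →
      JE (Ω ∩ Metric.ball c r) u ≤ JE (Ω ∩ Metric.ball c r) v

/- Let `w` be a competitor for the limit `v`. Locally Lipschitz functions that agree on a set have
the same gradient almost everywhere on it, so only energies on the bounded open set `A = {w ≠ v}`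
have to be compared. On `A` the energy is lower semicontinuous along `u_k → v`: integration by parts
and density give weak convergence of the gradients, and `𝟙_{v>0} ≤ liminf 𝟙_{u_k>0}` pointwise. In
general `w ≠ u_k` off `A`, so the minimality of `u_k` is tested with the projection `W_k` of `w`
onto `[u_k - 2|w - v|, u_k + 2|w - v|]`: it equals `u_k` off `A`, and at each point of `A` it
eventually equals `w`. The `W_k` are uniformly Lipschitz on `A`, so `limsup J_A(W_k) ≤ J_A(w)`. -/

section LipschitzFunctions

variable {X Y : Type*} [PseudoEMetricSpace X] [PseudoEMetricSpace Y]

theorem lipschitzOnWith_of_tendsto {ι : Type*} {l : Filter ι} [l.NeBot] {f : ι → X → Y}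
    {f₀ : X → Y} {L : ℝ≥0} {s : Set X} (hf : ∀ i, LipschitzOnWith L (f i) s)
    (h_lim : ∀ x, Tendsto (fun i => f i x) l (nhds (f₀ x))) : LipschitzOnWith L f₀ s :=
  (isClosed_setOfPred_lipschitzOnWith L s).mem_of_tendsto (tendsto_pi_nhds.2 h_lim) (.of_forall hf)

theorem locallyLipschitz_of_forall_isCompact [WeaklyLocallyCompactSpace X] {f : X → Y}
    (hf : ∀ K, IsCompact K → ∃ L : ℝ≥0, LipschitzOnWith L f K) : LocallyLipschitz f := fun x =>
  let ⟨K, hK, hKx⟩ := exists_compact_mem_nhds x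
  (hf K hK).imp fun _ hL => ⟨K, hKx, hL⟩

theorem exists_lipschitzWith_isCompact_range_eqOn {E : Type*} [NormedAddCommGroup E]
    [NormedSpace ℝ E] [FiniteDimensional ℝ E] {s : Set E} (hs : Bornology.IsBounded s) :
    ∃ (C : ℝ≥0) (P : E → E), LipschitzWith C P ∧ IsCompact (range P) ∧ EqOn P id s := by
  obtain ⟨r, hr_pos, hr⟩ := hs.subset_closedBall_lt 0 0
  let χ : ContDiffBump (0 : E) := ⟨r, r + 1, hr_pos, lt_add_one r⟩
  have h_smooth : ContDiff ℝ 1 fun x => χ x • x := χ.contDiff.smul contDiff_id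
  have h_supp : HasCompactSupport fun x => χ x • x := χ.hasCompactSupport.smul_right
  obtain ⟨C, hC⟩ := h_smooth.lipschitzWith_of_hasCompactSupport h_supp one_ne_zero
  refine ⟨C, _, hC, h_supp.isCompact_range h_smooth.continuous, fun x hx => ?_⟩
  simp only [χ.one_of_mem_closedBall (hr hx), one_smul, id]

end LipschitzFunctions

section AlmostEverywhere

variable {E F : Type*} [NormedAddCommGroup E] [NormedSpace ℝ E] [FiniteDimensional ℝ E]
  [MeasurableSpace E] [BorelSpace E] {μ : Measure E} [μ.IsAddHaarMeasure]
  [NormedAddCommGroup F] [NormedSpace ℝ F]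

theorem ae_differentiableAt_of_locallyLipschitz [FiniteDimensional ℝ F] {f : E → F}
    (hf : LocallyLipschitz f) : ∀ᵐ x ∂μ, DifferentiableAt ℝ f x := by
  refine measure_null_of_locally_null _ fun x _ => ?_
  obtain ⟨C, t, ht, hft⟩ := hf x
  refine ⟨_, inter_mem_nhdsWithin _ (interior_mem_nhds.2 ht), measure_mono_null ?_
    (hft.mono interior_subset).ae_differentiableWithinAt_of_mem⟩
  rintro y ⟨hy, hyt⟩ h
  exact hy ((h hyt).differentiableAt (isOpen_interior.mem_nhds hyt))

theorem ae_hasFDerivAt_zero_of_eq_zero {f : E → F} (hf : LocallyLipschitz f) :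
    ∀ᵐ x ∂μ, f x = 0 → HasFDerivAt f (0 : E →L[ℝ] F) x := by
  have h_norm : LocallyLipschitz fun x => ‖f x‖ :=
    lipschitzWith_one_norm.locallyLipschitz.comp hf
  filter_upwards [ae_differentiableAt_of_locallyLipschitz h_norm] with x hx hfx
  -- The norm of `f` is minimal at a zero, so its derivative vanishes there.
  have h_min : IsLocalMin (fun y => ‖f y‖) x :=
    Eventually.of_forall fun y => by simp [hfx]
  have h_deriv := hx.hasFDerivAt
  rw [h_min.fderiv_eq_zero, hasFDerivAt_iff_isLittleO] at h_deriv
  rw [hasFDerivAt_iff_isLittleO]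
  simpa [hfx] using h_deriv

theorem ae_fderiv_eq_of_eq [FiniteDimensional ℝ F] {f g : E → F} (hf : LocallyLipschitz f)
    (hg : LocallyLipschitz g) : ∀ᵐ x ∂μ, f x = g x → fderiv ℝ f x = fderiv ℝ g x := by
  filter_upwards [ae_hasFDerivAt_zero_of_eq_zero (μ := μ) (hf.sub hg),
    ae_differentiableAt_of_locallyLipschitz (μ := μ) hf,
    ae_differentiableAt_of_locallyLipschitz (μ := μ) hg] with x h_sub hfx hgx hx
  rw [← sub_eq_zero, ← fderiv_fun_sub hfx hgx]
  exact (h_sub (sub_eq_zero.2 hx)).fderiv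

end AlmostEverywhere

section Energy

section Density

variable {E : Type*} [NormedAddCommGroup E] [InnerProductSpace ℝ E] [CompleteSpace E]

/-- The integrand `‖∇u‖² + 𝟙_{u>0}` of the Alt–Caffarelli energy. -/
noncomputable def energyDensity (u : E → ℝ) (x : E) : ℝ≥0∞ :=
  (‖gradient u x‖₊ : ℝ≥0∞) ^ 2 + if 0 < u x then 1 else 0

theorem nnnorm_gradient (f : E → ℝ) (x : E) : ‖gradient f x‖₊ = ‖fderiv ℝ f x‖₊ := by
  simp [gradient]

theorem nnnorm_gradient_le_of_lipschitzOn {f : E → ℝ} {C : ℝ≥0} {s : Set E} {x : E}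
    (hs : s ∈ nhds x) (hf : LipschitzOnWith C f s) : ‖gradient f x‖₊ ≤ C :=
  (nnnorm_gradient f x).trans_le (norm_fderiv_le_of_lipschitzOn ℝ hs hf)

theorem norm_gradient_le_of_lipschitz {f : E → ℝ} {C : ℝ≥0} (hf : LipschitzWith C f) (x : E) :
    ‖gradient f x‖ ≤ C :=
  nnnorm_gradient_le_of_lipschitzOn univ_mem hf.lipschitzOnWith

theorem energyDensity_le_of_lipschitzOn {f : E → ℝ} {C : ℝ≥0} {s : Set E} {x : E}
    (hs : s ∈ nhds x) (hf : LipschitzOnWith C f s) : energyDensity f x ≤ C ^ 2 + 1 := by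
  unfold energyDensity
  gcongr
  · exact nnnorm_gradient_le_of_lipschitzOn hs hf
  · split_ifs <;> simp

variable [MeasurableSpace E] [BorelSpace E]

theorem measurable_gradient (f : E → ℝ) : Measurable (gradient f) :=
  (InnerProductSpace.toDual ℝ E).symm.continuous.measurable.comp (measurable_fderiv ℝ f)

theorem measurable_energyDensity {f : E → ℝ} (hf : Continuous f) :
    Measurable (energyDensity f) :=
  ((measurable_gradient f).nnnorm.coe_nnreal_ennreal.pow_const 2).add
    (.ite (measurableSet_lt measurable_const hf.measurable) measurable_const measurable_const)

theorem ae_energyDensity_eq_of_eq [FiniteDimensional ℝ E] {μ : Measure E} [μ.IsAddHaarMeasure]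
    {f g : E → ℝ} (hf : LocallyLipschitz f) (hg : LocallyLipschitz g) :
    ∀ᵐ x ∂μ, f x = g x → energyDensity f x = energyDensity g x := by
  filter_upwards [ae_fderiv_eq_of_eq hf hg] with x h_deriv hx
  rw [energyDensity, energyDensity, gradient, h_deriv hx, hx, gradient]

end Density

variable {n : ℕ} {A D : Set (EuclideanSpace ℝ (Fin n))} {f g : EuclideanSpace ℝ (Fin n) → ℝ}

theorem JE_eq_setLIntegral_energyDensity :
    JE D f = ∫⁻ x in D, energyDensity f x :=
  rfl

theorem JE_lt_top (hf : LocallyLipschitz f) (hD : Bornology.IsBounded D) : JE D f < ∞ := by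
  obtain ⟨r, hr⟩ := hD.subset_ball 0
  obtain ⟨C, hC⟩ := hf.locallyLipschitzOn.exists_lipschitzOnWith_of_compact
    (isCompact_closedBall (0 : EuclideanSpace ℝ (Fin n)) r)
  refine (lintegral_mono_set hr).trans_lt
    (setLIntegral_lt_top_of_le_nnreal measure_ball_lt_top.ne ⟨C ^ 2 + 1, fun x hx => ?_⟩)
  rw [ENNReal.coe_add, ENNReal.coe_pow, ENNReal.coe_one]
  exact energyDensity_le_of_lipschitzOn (closedBall_mem_nhds_of_mem hx) hC

theorem JE_sdiff_eq_of_eqOn_compl (hf : LocallyLipschitz f) (hg : LocallyLipschitz g)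
    (hA : MeasurableSet A) (hfg : EqOn f g Aᶜ) : JE (D \ A) f = JE (D \ A) g := by
  refine lintegral_congr_ae (ae_restrict_of_ae_restrict_of_subset (sdiff_subset_compl D A) ?_)
  rw [ae_restrict_iff' hA.compl]
  filter_upwards [ae_energyDensity_eq_of_eq hf hg] with x h hx using h (hfg hx)

theorem JE_le_JE_iff_of_eqOn_compl (hf : LocallyLipschitz f) (hg : LocallyLipschitz g)
    (hA : MeasurableSet A) (hfg : EqOn f g Aᶜ) (hAD : A ⊆ D) (hD : Bornology.IsBounded D) :
    JE D f ≤ JE D g ↔ JE A f ≤ JE A g := by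
  have h_split (h : EuclideanSpace ℝ (Fin n) → ℝ) : JE D h = JE A h + JE (D \ A) h := by
    simp only [JE_eq_setLIntegral_energyDensity]
    rw [← lintegral_inter_add_sdiff _ D hA, inter_eq_self_of_subset_right hAD]
  rw [h_split f, h_split g, JE_sdiff_eq_of_eqOn_compl hf hg hA hfg]
  exact ENNReal.add_le_add_iff_right (JE_lt_top hg (hD.subset sdiff_subset)).ne

theorem IsMinimizer.JE_le {Ω : Set (EuclideanSpace ℝ (Fin n))} (hf : IsMinimizer Ω f)
    (hg_nonneg : ∀ x, 0 ≤ g x) (hg : LocallyLipschitz g) (hA : MeasurableSet A)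
    (hA_bdd : Bornology.IsBounded A) (hAΩ : A ⊆ Ω) (hgf : EqOn g f Aᶜ) : JE A f ≤ JE A g := by
  obtain ⟨r, hr⟩ := hA_bdd.subset_ball 0
  have h_ne : {x | g x ≠ f x} ⊆ A := fun x hx => by_contra fun hxA => hx (hgf hxA)
  rw [← JE_le_JE_iff_of_eqOn_compl hf.2.1 hg hA hgf.symm (subset_inter hAΩ hr)
    (isBounded_ball.subset inter_subset_right)]
  exact hf.2.2 g hg_nonneg hg (hA_bdd.subset h_ne) (h_ne.trans hAΩ) 0 r (h_ne.trans hr)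

theorem JE_le_add_measure_ne {C : ℝ≥0} (hf : LocallyLipschitz f) (hg : LocallyLipschitz g)
    (hA : IsOpen A) (hfC : LipschitzOnWith C f A) :
    JE A f ≤ JE A g + (C ^ 2 + 1) * volume (A ∩ {x | f x ≠ g x}) := by
  have h_ne : MeasurableSet {x | f x ≠ g x} :=
    (isOpen_ne_fun hf.continuous hg.continuous).measurableSet
  rw [inter_comm, ← Measure.restrict_apply h_ne, ← lintegral_indicator_const h_ne,
    JE_eq_setLIntegral_energyDensity, JE_eq_setLIntegral_energyDensity,
    ← lintegral_add_left (measurable_energyDensity hg.continuous)]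
  refine setLIntegral_mono_ae' hA.measurableSet ?_
  filter_upwards [ae_energyDensity_eq_of_eq hf hg] with x h_eq hxA
  by_cases hx : f x = g x
  · exact (h_eq hx).trans_le le_self_add
  · simpa [hx] using le_add_left (energyDensity_le_of_lipschitzOn (hA.mem_nhds hxA) hfC)

end Energy

section WeakConvergence

variable {ι α E F : Type*} {l : Filter ι}

section Criterion

variable [NormedAddCommGroup F] [InnerProductSpace ℝ F]

theorem integrable_inner_of_bounded [MeasurableSpace α] {μ : Measure α} {φ g : α → F} {C : ℝ≥0}
    (hφ : AEStronglyMeasurable φ μ) (hC : ∀ x, ‖φ x‖ ≤ C) (hg : Integrable g μ) :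
    Integrable (fun x => inner ℝ (φ x) (g x)) μ := by
  refine (hg.norm.const_mul (C : ℝ)).mono' (hφ.inner hg.1) (.of_forall fun x => ?_)
  exact (norm_inner_le_norm _ _).trans (by gcongr; exact hC x)

theorem lipschitzWith_integral_inner [MeasurableSpace α] {μ : Measure α} {φ : α → F} {C : ℝ≥0}
    (hφ : AEStronglyMeasurable φ μ) (hC : ∀ x, ‖φ x‖ ≤ C) :
    LipschitzWith C fun g : Lp F 1 μ => ∫ x, inner ℝ (φ x) (g x) ∂μ := by
  refine .of_dist_le_mul fun g h => ?_
  rw [dist_eq_norm, dist_eq_norm, L1.norm_eq_integral_norm, ← integral_const_mul,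
    ← integral_sub (integrable_inner_of_bounded hφ hC (L1.integrable_coeFn g))
      (integrable_inner_of_bounded hφ hC (L1.integrable_coeFn h))]
  refine norm_integral_le_of_norm_le ((L1.integrable_coeFn _).norm.const_mul _) ?_
  filter_upwards [Lp.coeFn_sub g h] with x hx
  rw [← inner_sub_right, ← Pi.sub_apply, ← hx]
  exact (norm_inner_le_norm _ _).trans (by gcongr; exact hC x)

variable [NormedAddCommGroup E] [NormedSpace ℝ E] [FiniteDimensional ℝ E]
  [MeasurableSpace E] [BorelSpace E] {μ : Measure E} [IsFiniteMeasureOnCompacts μ]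

theorem tendsto_integral_inner_of_forall_contDiff {φ : ι → E → F} {φ₀ : E → F} {C : ℝ≥0}
    (hφ : ∀ i, AEStronglyMeasurable (φ i) μ) (hφC : ∀ i x, ‖φ i x‖ ≤ C)
    (hφ₀ : AEStronglyMeasurable φ₀ μ) (hφ₀C : ∀ x, ‖φ₀ x‖ ≤ C)
    (h : ∀ g : E → F, ContDiff ℝ (⊤ : ℕ∞) g → HasCompactSupport g →
      Tendsto (fun i => ∫ x, inner ℝ (φ i x) (g x) ∂μ) l (nhds (∫ x, inner ℝ (φ₀ x) (g x) ∂μ)))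
    {g : E → F} (hg : Integrable g μ) :
    Tendsto (fun i => ∫ x, inner ℝ (φ i x) (g x) ∂μ) l
      (nhds (∫ x, inner ℝ (φ₀ x) (g x) ∂μ)) := by
  have h_congr {ψ : E → F} {g₁ g₂ : E → F} (hg : g₁ =ᵐ[μ] g₂) :
      ∫ x, inner ℝ (ψ x) (g₁ x) ∂μ = ∫ x, inner ℝ (ψ x) (g₂ x) ∂μ :=
    integral_congr_ae (hg.mono fun x hx => congrArg (inner ℝ (ψ x)) hx)
  have h_closed : IsClosed {G : Lp F 1 μ | Tendsto (fun i => ∫ x, inner ℝ (φ i x) (G x) ∂μ) l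
      (nhds (∫ x, inner ℝ (φ₀ x) (G x) ∂μ))} :=
    (LipschitzWith.uniformEquicontinuous _ C fun i =>
      lipschitzWith_integral_inner (hφ i) (hφC i)).equicontinuous.isClosed_setOfPred_tendsto
      (lipschitzWith_integral_inner hφ₀ hφ₀C).continuous
  have h_mem := closure_minimal ?_ h_closed
    (Lp.dense_hasCompactSupport_contDiff one_ne_top (hg.toL1 g))
  · simpa only [mem_ofPred_eq, h_congr hg.coeFn_toL1] using h_mem
  · rintro G ⟨g', hGg', hg'_supp, hg'⟩
    simpa only [mem_ofPred_eq, h_congr hGg'] using h g' hg' hg'_supp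

end Criterion

section Lipschitz

variable [NormedAddCommGroup E] [NormedSpace ℝ E] [FiniteDimensional ℝ E]
  [MeasurableSpace E] [BorelSpace E] {μ : Measure E} [μ.IsAddHaarMeasure]
  [l.IsCountablyGenerated] {f : ι → E → ℝ} {f₀ : E → ℝ} {L : ℝ≥0}

theorem tendsto_integral_lineDeriv_mul (hf : ∀ i, LipschitzWith L (f i))
    (hf₀ : LipschitzWith L f₀) (h_lim : ∀ x, Tendsto (fun i => f i x) l (nhds (f₀ x)))
    {g : E → ℝ} (hg : ContDiff ℝ 1 g) (hg_supp : HasCompactSupport g) (e : E) :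
    Tendsto (fun i => ∫ x, lineDeriv ℝ (f i) x e * g x ∂μ) l
      (nhds (∫ x, lineDeriv ℝ f₀ x e * g x ∂μ)) := by
  obtain ⟨D, hD⟩ := hg.lipschitzWith_of_hasCompactSupport hg_supp one_ne_zero
  simp_rw [hf₀.integral_lineDeriv_mul_eq hD hg_supp,
    fun i => (hf i).integral_lineDeriv_mul_eq (μ := μ) hD hg_supp e,
    (hg.differentiable one_ne_zero).differentiableAt.lineDeriv_eq_fderiv]
  have h_cont : Continuous fun x => fderiv ℝ g x (-e) :=
    (hg.continuous_fderiv one_ne_zero).clm_apply continuous_const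
  have h_bdd : ∀ᶠ i in l, ‖f i 0‖ ≤ ‖f₀ 0‖ + 1 :=
    (h_lim 0).norm.eventually_le_const (lt_add_one _)
  refine tendsto_integral_filter_of_dominated_convergence
    (fun x => ‖fderiv ℝ g x (-e) * (‖f₀ 0‖ + 1 + L * ‖x‖)‖)
    (.of_forall fun i => (h_cont.mul (hf i).continuous).aestronglyMeasurable) ?_ ?_
    (.of_forall fun x => (h_lim x).const_mul _)
  · filter_upwards [h_bdd] with i hi
    refine .of_forall fun x => ?_
    have h_growth : ‖f i x‖ ≤ ‖f₀ 0‖ + 1 + L * ‖x‖ := by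
      have := (hf i).norm_sub_le x 0
      rw [sub_zero] at this
      linarith [norm_sub_norm_le (f i x) (f i 0)]
    rw [norm_mul, norm_mul]
    gcongr
    exact h_growth.trans (le_abs_self _)
  · refine (Continuous.integrable_of_hasCompactSupport (by fun_prop) ?_).norm
    exact (hg_supp.fderiv_apply ℝ (-e)).mul_right

end Lipschitz

section Gradient

variable [NormedAddCommGroup E] [InnerProductSpace ℝ E] [FiniteDimensional ℝ E]

theorem inner_gradient_eq_sum_lineDeriv {f : E → ℝ} {x : E} (hf : DifferentiableAt ℝ f x)
    (y : E) : inner ℝ (gradient f x) y = ∑ k, lineDeriv ℝ f x (stdOrthonormalBasis ℝ E k) *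
      inner ℝ (stdOrthonormalBasis ℝ E k) y := by
  simp_rw [← (stdOrthonormalBasis ℝ E).sum_inner_mul_inner (gradient f x) y,
    hf.lineDeriv_eq_fderiv, gradient, InnerProductSpace.toDual_symm_apply]

variable [MeasurableSpace E] [BorelSpace E] {μ : Measure E} [μ.IsAddHaarMeasure] {L : ℝ≥0}

theorem integral_inner_gradient_eq_sum {f : E → ℝ} (hf : LipschitzWith L f) {g : E → E}
    (hg : Integrable g μ) :
    ∫ x, inner ℝ (gradient f x) (g x) ∂μ =
      ∑ k, ∫ x, lineDeriv ℝ f x (stdOrthonormalBasis ℝ E k) *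
        inner ℝ (stdOrthonormalBasis ℝ E k) (g x) ∂μ := by
  rw [← integral_finsetSum _ fun k _ => ?_]
  · refine integral_congr_ae ?_
    filter_upwards [hf.ae_differentiableAt] with x hx
      using inner_gradient_eq_sum_lineDeriv hx (g x)
  · exact (hg.const_inner _).bdd_mul (aestronglyMeasurable_lineDeriv hf.continuous _)
      (.of_forall fun x => norm_lineDeriv_le_of_lipschitz ℝ hf)

theorem tendsto_integral_inner_gradient [l.IsCountablyGenerated] {f : ι → E → ℝ} {f₀ : E → ℝ}
    (hf : ∀ i, LipschitzWith L (f i)) (hf₀ : LipschitzWith L f₀)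
    (h_lim : ∀ x, Tendsto (fun i => f i x) l (nhds (f₀ x))) {g : E → E} (hg : Integrable g μ) :
    Tendsto (fun i => ∫ x, inner ℝ (gradient (f i) x) (g x) ∂μ) l
      (nhds (∫ x, inner ℝ (gradient f₀ x) (g x) ∂μ)) := by
  refine tendsto_integral_inner_of_forall_contDiff
    (fun i => (measurable_gradient (f i)).aestronglyMeasurable)
    (fun i => norm_gradient_le_of_lipschitz (hf i))
    (measurable_gradient f₀).aestronglyMeasurable
    (norm_gradient_le_of_lipschitz hf₀) (fun g hg hg_supp => ?_) hg
  have hg_int := hg.continuous.integrable_of_hasCompactSupport (μ := μ) hg_supp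
  simp_rw [integral_inner_gradient_eq_sum hf₀ hg_int,
    fun i => integral_inner_gradient_eq_sum (hf i) hg_int]
  refine tendsto_finsetSum _ fun k _ => tendsto_integral_lineDeriv_mul hf hf₀ h_lim ?_ ?_ _
  · exact contDiff_const.inner ℝ (hg.of_le (by simp))
  · exact hg_supp.comp_left (inner_zero_right _)

end Gradient

end WeakConvergence

section LowerSemicontinuity

variable {ι : Type*} {l : Filter ι}

theorem add_liminf_le_liminf_add (a b : ι → ℝ≥0∞) :
    liminf a l + liminf b l ≤ liminf (fun i => a i + b i) l := by
  simp only [liminf_eq_iSup_iInf]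
  refine ENNReal.biSup_add_biSup_le' ⟨univ, univ_mem⟩ ⟨univ, univ_mem⟩ fun s hs t ht => ?_
  refine le_iSup₂_of_le (s ∩ t) (inter_mem hs ht) (le_iInf₂ fun i hi => ?_)
  exact add_le_add (iInf₂_le i hi.1) (iInf₂_le i hi.2)

theorem lintegral_ite_pos_le_liminf [l.IsCountablyGenerated] {α : Type*} [MeasurableSpace α]
    {μ : Measure α} {f : ι → α → ℝ} {f₀ : α → ℝ}
    (hf : ∀ i, Measurable (f i)) (h_lim : ∀ x, Tendsto (fun i => f i x) l (nhds (f₀ x))) :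
    ∫⁻ x, (if 0 < f₀ x then 1 else 0) ∂μ ≤
      liminf (fun i => ∫⁻ x, (if 0 < f i x then 1 else 0) ∂μ) l := by
  refine (lintegral_mono fun x => ?_).trans (lintegral_liminf_le' fun i =>
    (Measurable.ite (measurableSet_lt measurable_const (hf i)) measurable_const
      measurable_const).aemeasurable)
  split_ifs with hx
  · refine le_liminf_of_le (by isBoundedDefault) ?_
    filter_upwards [(h_lim x).eventually_const_lt hx] with i hi
    rw [if_pos hi]
  · exact zero_le

theorem ofReal_integral_le_lintegral_ofReal {α : Type*} [MeasurableSpace α] {μ : Measure α}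
    (f : α → ℝ) : ENNReal.ofReal (∫ x, f x ∂μ) ≤ ∫⁻ x, ENNReal.ofReal (f x) ∂μ := by
  by_cases hf : Integrable f μ
  · rw [integral_eq_lintegral_pos_part_sub_lintegral_neg_part hf]
    exact (ENNReal.ofReal_le_ofReal (sub_le_self _ toReal_nonneg)).trans ofReal_toReal_le
  · simp [integral_undef hf]

theorem ofReal_two_mul_inner_sub_inner_self_le {F : Type*} [NormedAddCommGroup F]
    [InnerProductSpace ℝ F] (y z : F) :
    ENNReal.ofReal (2 * inner ℝ y z - inner ℝ z z) ≤ (‖y‖₊ : ℝ≥0∞) ^ 2 := by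
  rw [← ENNReal.coe_pow, ENNReal.ofReal_le_coe, NNReal.coe_pow, coe_nnnorm,
    real_inner_self_eq_norm_sq]
  linarith [norm_sub_sq_real y z, sq_nonneg ‖y - z‖]

theorem lintegral_nnnorm_sq_le_liminf {α F : Type*} [MeasurableSpace α] {μ : Measure α}
    [NormedAddCommGroup F] [InnerProductSpace ℝ F] [l.NeBot] {φ : ι → α → F} {φ₀ : α → F}
    (hφ : ∀ i, Integrable (fun x => inner ℝ (φ i x) (φ₀ x)) μ)
    (hφ₀ : Integrable (fun x => inner ℝ (φ₀ x) (φ₀ x)) μ)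
    (h_lim : Tendsto (fun i => ∫ x, inner ℝ (φ i x) (φ₀ x) ∂μ) l
      (nhds (∫ x, inner ℝ (φ₀ x) (φ₀ x) ∂μ))) :
    ∫⁻ x, (‖φ₀ x‖₊ : ℝ≥0∞) ^ 2 ∂μ ≤ liminf (fun i => ∫⁻ x, (‖φ i x‖₊ : ℝ≥0∞) ^ 2 ∂μ) l := by
  have h_sq : ∫⁻ x, (‖φ₀ x‖₊ : ℝ≥0∞) ^ 2 ∂μ = ENNReal.ofReal (∫ x, inner ℝ (φ₀ x) (φ₀ x) ∂μ) := by
    rw [ofReal_integral_eq_lintegral_ofReal hφ₀ (.of_forall fun x => real_inner_self_nonneg)]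
    simp_rw [real_inner_self_eq_norm_sq, ENNReal.ofReal_pow (norm_nonneg _), ofReal_norm, enorm]
  have h_tendsto : Tendsto (fun i => ENNReal.ofReal
      (2 * ∫ x, inner ℝ (φ i x) (φ₀ x) ∂μ - ∫ x, inner ℝ (φ₀ x) (φ₀ x) ∂μ)) l
      (nhds (ENNReal.ofReal (∫ x, inner ℝ (φ₀ x) (φ₀ x) ∂μ))) := by
    refine ENNReal.tendsto_ofReal ?_
    convert (h_lim.const_mul 2).sub_const (∫ x, inner ℝ (φ₀ x) (φ₀ x) ∂μ) using 2
    ring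
  rw [h_sq, ← h_tendsto.liminf_eq]
  refine liminf_le_liminf (.of_forall fun i => ?_)
  rw [← integral_const_mul, ← integral_sub ((hφ i).const_mul 2) hφ₀]
  exact (ofReal_integral_le_lintegral_ofReal _).trans
    (lintegral_mono fun x => ofReal_two_mul_inner_sub_inner_self_le _ _)

theorem lintegral_nnnorm_gradient_sq_le_liminf {E : Type*} [NormedAddCommGroup E]
    [InnerProductSpace ℝ E] [FiniteDimensional ℝ E] [MeasurableSpace E] [BorelSpace E]
    {μ : Measure E} [μ.IsAddHaarMeasure] [l.NeBot] [l.IsCountablyGenerated]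
    {f : ι → E → ℝ} {f₀ : E → ℝ} {L : ℝ≥0} (hf : ∀ i, LipschitzWith L (f i))
    (hf₀ : LipschitzWith L f₀) (h_lim : ∀ x, Tendsto (fun i => f i x) l (nhds (f₀ x)))
    {U : Set E} (hU : MeasurableSet U) (hU_fin : μ U ≠ ∞) :
    ∫⁻ x in U, (‖gradient f₀ x‖₊ : ℝ≥0∞) ^ 2 ∂μ ≤
      liminf (fun i => ∫⁻ x in U, (‖gradient (f i) x‖₊ : ℝ≥0∞) ^ 2 ∂μ) l := by
  have h_meas (f : E → ℝ) : AEStronglyMeasurable (gradient f) (μ.restrict U) :=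
    (measurable_gradient f).aestronglyMeasurable
  have h_int : IntegrableOn (gradient f₀) U μ :=
    .of_bound hU_fin.lt_top (h_meas f₀) L (.of_forall (norm_gradient_le_of_lipschitz hf₀))
  have h_indicator (f : E → ℝ) : ∫ x, inner ℝ (gradient f x) (U.indicator (gradient f₀) x) ∂μ =
      ∫ x in U, inner ℝ (gradient f x) (gradient f₀ x) ∂μ := by
    rw [← integral_indicator hU]
    congr with x
    by_cases hx : x ∈ U <;> simp [hx]
  have h_weak := tendsto_integral_inner_gradient hf hf₀ h_lim
    ((integrable_indicator_iff hU).2 h_int)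
  simp_rw [h_indicator] at h_weak
  exact lintegral_nnnorm_sq_le_liminf
    (fun i => integrable_inner_of_bounded (h_meas _) (norm_gradient_le_of_lipschitz (hf i)) h_int)
    (integrable_inner_of_bounded (h_meas _) (norm_gradient_le_of_lipschitz hf₀) h_int) h_weak

variable {n : ℕ}

theorem JE_eq_lintegral_add (D : Set (EuclideanSpace ℝ (Fin n)))
    (f : EuclideanSpace ℝ (Fin n) → ℝ) : JE D f =
      (∫⁻ x in D, (‖gradient f x‖₊ : ℝ≥0∞) ^ 2) + ∫⁻ x in D, if 0 < f x then 1 else 0 :=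
  lintegral_add_left ((measurable_gradient f).nnnorm.coe_nnreal_ennreal.pow_const 2) _

theorem JE_le_liminf [l.NeBot] [l.IsCountablyGenerated]
    {f : ι → EuclideanSpace ℝ (Fin n) → ℝ} {f₀ : EuclideanSpace ℝ (Fin n) → ℝ}
    (hf : ∀ K, IsCompact K → ∃ L : ℝ≥0, ∀ i, LipschitzOnWith L (f i) K)
    (h_lim : ∀ x, Tendsto (fun i => f i x) l (nhds (f₀ x)))
    {U : Set (EuclideanSpace ℝ (Fin n))} (hU : IsOpen U) (hU_bdd : Bornology.IsBounded U) :
    JE U f₀ ≤ liminf (fun i => JE U (f i)) l := by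
  obtain ⟨C, P, hP, hP_range, hPU⟩ := exists_lipschitzWith_isCompact_range_eqOn hU_bdd
  obtain ⟨L, hL⟩ := hf _ hP_range
  have h_lip {h : EuclideanSpace ℝ (Fin n) → ℝ} (hh : LipschitzOnWith L h (range P)) :
      LipschitzWith (L * C) (h ∘ P) :=
    lipschitzOnWith_univ.1 (hh.comp hP.lipschitzOnWith fun x _ => mem_range_self x)
  have h_grad (h : EuclideanSpace ℝ (Fin n) → ℝ) :
      ∫⁻ x in U, (‖gradient (h ∘ P) x‖₊ : ℝ≥0∞) ^ 2 = ∫⁻ x in U, (‖gradient h x‖₊ : ℝ≥0∞) ^ 2 := by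
    refine setLIntegral_congr_fun hU.measurableSet fun x hx => ?_
    have : h ∘ P =ᶠ[nhds x] h := by
      filter_upwards [hU.mem_nhds hx] with y hy using congrArg h (hPU hy)
    simp_rw [gradient, this.fderiv_eq]
  simp_rw [JE_eq_lintegral_add]
  refine le_trans (add_le_add ?_ ?_) (add_liminf_le_liminf_add _ _)
  · rw [← h_grad f₀]
    exact (lintegral_nnnorm_gradient_sq_le_liminf (fun i => h_lip (hL i))
      (h_lip (lipschitzOnWith_of_tendsto hL h_lim)) (fun x => h_lim (P x)) hU.measurableSet
      hU_bdd.measure_lt_top.ne).trans_eq (liminf_congr (.of_forall fun i => h_grad (f i)))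
  · refine lintegral_ite_pos_le_liminf (fun i => Continuous.measurable ?_) h_lim
    exact (locallyLipschitz_of_forall_isCompact fun K hK => (hf K hK).imp fun _ h => h i).continuous

end LowerSemicontinuity

section Competitor

/-- The point of the interval `[a - r, a + r]` nearest to `b`, for `0 ≤ r`. -/
noncomputable def clamp (a r b : ℝ) : ℝ :=
  max (a - r) (min b (a + r))

theorem clamp_zero (a b : ℝ) : clamp a 0 b = a := by
  simp [clamp]

theorem clamp_nonneg {a r b : ℝ} (ha : 0 ≤ a) (hr : 0 ≤ r) (hb : 0 ≤ b) : 0 ≤ clamp a r b :=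
  le_max_of_le_right (le_min hb (add_nonneg ha hr))

theorem clamp_of_abs_sub_le {a r b : ℝ} (h : |b - a| ≤ r) : clamp a r b = b := by
  obtain ⟨h_lower, h_upper⟩ := abs_sub_le_iff.1 h
  rw [clamp, min_eq_left (by linarith), max_eq_right (by linarith)]

/-- The function nearest to `g` among those within `2 * |g - h|` of `f`. It competes with a
minimizer `f` close to `h` when `g` competes with `h`. -/
noncomputable def clampedCompetitor {α : Type*} (f g h : α → ℝ) (x : α) : ℝ :=
  clamp (f x) (2 * |g x - h x|) (g x)

section

variable {α : Type*} {f g h : α → ℝ}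

theorem clampedCompetitor_nonneg (hf : ∀ x, 0 ≤ f x) (hg : ∀ x, 0 ≤ g x) (x : α) :
    0 ≤ clampedCompetitor f g h x :=
  clamp_nonneg (hf x) (by positivity) (hg x)

theorem clampedCompetitor_eq_left {x : α} (hx : g x = h x) : clampedCompetitor f g h x = f x := by
  simp [clampedCompetitor, hx, clamp_zero]

theorem eventually_clampedCompetitor_eq_right {ι : Type*} {l : Filter ι} {f : ι → α → ℝ} {x : α}
    (h_lim : Tendsto (fun i => f i x) l (nhds (h x))) (hx : g x ≠ h x) :
    ∀ᶠ i in l, clampedCompetitor (f i) g h x = g x := by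
  have h_lt : |g x - h x| < 2 * |g x - h x| := by
    linarith [abs_pos.2 (sub_ne_zero.2 hx)]
  filter_upwards [(h_lim.const_sub (g x)).abs.eventually_lt_const h_lt] with i hi
  exact clamp_of_abs_sub_le hi.le

theorem exists_lipschitzWith_clamp_two_mul_abs_sub :
    ∃ C : ℝ≥0, LipschitzWith C fun p : ℝ × ℝ × ℝ => clamp p.1 (2 * |p.2.1 - p.2.2|) p.2.1 := by
  have h_left : LipschitzWith 1 fun p : ℝ × ℝ × ℝ => p.1 := .prod_fst
  have h_mid : LipschitzWith (1 * 1) fun p : ℝ × ℝ × ℝ => p.2.1 :=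
    LipschitzWith.prod_fst.comp .prod_snd
  have h_right : LipschitzWith (1 * 1) fun p : ℝ × ℝ × ℝ => p.2.2 :=
    LipschitzWith.prod_snd.comp .prod_snd
  have h_radius : LipschitzWith _ fun p : ℝ × ℝ × ℝ => 2 * |p.2.1 - p.2.2| :=
    (lipschitzWith_smul (2 : ℝ)).comp (lipschitzWith_one_norm.comp (h_mid.sub h_right))
  exact ⟨_, (h_left.sub h_radius).max (h_mid.min (h_left.add h_radius))⟩

theorem locallyLipschitz_clampedCompetitor [PseudoEMetricSpace α] (hf : LocallyLipschitz f)
    (hg : LocallyLipschitz g) (hh : LocallyLipschitz h) :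
    LocallyLipschitz (clampedCompetitor f g h) :=
  let ⟨_, hC⟩ := exists_lipschitzWith_clamp_two_mul_abs_sub
  hC.locallyLipschitz.comp (hf.prodMk (hg.prodMk hh))

theorem exists_forall_lipschitzOnWith_clampedCompetitor {ι : Type*} [PseudoEMetricSpace α]
    {s : Set α} {f : ι → α → ℝ} (hf : ∃ C : ℝ≥0, ∀ i, LipschitzOnWith C (f i) s)
    (hg : ∃ C : ℝ≥0, LipschitzOnWith C g s) (hh : ∃ C : ℝ≥0, LipschitzOnWith C h s) :
    ∃ C : ℝ≥0, ∀ i, LipschitzOnWith C (clampedCompetitor (f i) g h) s :=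
  let ⟨_, hCf⟩ := hf
  let ⟨_, hCg⟩ := hg
  let ⟨_, hCh⟩ := hh
  let ⟨_, hC⟩ := exists_lipschitzWith_clamp_two_mul_abs_sub
  ⟨_, fun i => hC.comp_lipschitzOnWith ((hCf i).prodMk (hCg.prodMk hCh))⟩

end

end Competitor

section Compactness

variable {n : ℕ} {ι : Type*} {l : Filter ι}

theorem tendsto_measure_inter_ne_zero {α β : Type*} [MeasurableSpace α] [MeasurableSpace β]
    [MeasurableEq β] {μ : Measure α} [l.IsCountablyGenerated] {A : Set α} {f : ι → α → β}
    {g : α → β} (hA : MeasurableSet A) (hA_fin : μ A ≠ ∞) (hf : ∀ i, Measurable (f i))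
    (hg : Measurable g) (hfg : ∀ x ∈ A, ∀ᶠ i in l, f i x = g x) :
    Tendsto (fun i => μ (A ∩ {x | f i x ≠ g x})) l (nhds 0) := by
  rw [← measure_empty (μ := μ)]
  refine tendsto_measure_of_tendsto_indicator l
    (fun i => hA.inter (measurableSet_eq_fun (hf i) hg).compl) hA hA_fin
    (.of_forall fun i => inter_subset_left) fun x => ?_
  by_cases hx : x ∈ A
  · filter_upwards [hfg x hx] with i hi
    simp [hi]
  · exact .of_forall fun i => by simp [hx]

theorem liminf_JE_le_of_eventually_eq [l.NeBot] [l.IsCountablyGenerated]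
    {A : Set (EuclideanSpace ℝ (Fin n))} {f : ι → EuclideanSpace ℝ (Fin n) → ℝ}
    {g : EuclideanSpace ℝ (Fin n) → ℝ} (hA : IsOpen A) (hA_bdd : Bornology.IsBounded A)
    (hf : ∀ i, LocallyLipschitz (f i)) (hg : LocallyLipschitz g)
    (hfA : ∃ C : ℝ≥0, ∀ i, LipschitzOnWith C (f i) A)
    (hfg : ∀ x ∈ A, ∀ᶠ i in l, f i x = g x) :
    liminf (fun i => JE A (f i)) l ≤ JE A g := by
  obtain ⟨C, hC⟩ := hfA
  have h_vol := tendsto_measure_inter_ne_zero (μ := volume) hA.measurableSet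
    hA_bdd.measure_lt_top.ne (fun i => (hf i).continuous.measurable) hg.continuous.measurable hfg
  have h_bound := (ENNReal.Tendsto.const_mul h_vol
    (.inr (by finiteness : (C : ℝ≥0∞) ^ 2 + 1 ≠ ∞))).const_add (JE A g)
  rw [mul_zero, add_zero] at h_bound
  rw [← h_bound.liminf_eq]
  exact liminf_le_liminf (.of_forall fun i => JE_le_add_measure_ne (hf i) hg hA (hC i))

theorem JE_le_of_isMinimizer_of_tendsto [l.NeBot] [l.IsCountablyGenerated]
    {Ω : Set (EuclideanSpace ℝ (Fin n))} {u : ι → EuclideanSpace ℝ (Fin n) → ℝ}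
    {v w : EuclideanSpace ℝ (Fin n) → ℝ} (hu : ∀ i, IsMinimizer Ω (u i))
    (hu_lip : ∀ K, IsCompact K → ∃ L : ℝ≥0, ∀ i, LipschitzOnWith L (u i) K)
    (h_lim : ∀ x, Tendsto (fun i => u i x) l (nhds (v x))) (hv : LocallyLipschitz v)
    (hw_nonneg : ∀ x, 0 ≤ w x) (hw : LocallyLipschitz w)
    (h_bdd : Bornology.IsBounded {x | w x ≠ v x}) (h_sub : {x | w x ≠ v x} ⊆ Ω) :
    JE {x | w x ≠ v x} v ≤ JE {x | w x ≠ v x} w := by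
  set A := {x | w x ≠ v x}
  have hA : IsOpen A := isOpen_ne_fun hw.continuous hv.continuous
  let W (i : ι) := clampedCompetitor (u i) w v
  have hW (i : ι) : LocallyLipschitz (W i) := locallyLipschitz_clampedCompetitor (hu i).2.1 hw hv
  have h_min (i : ι) : JE A (u i) ≤ JE A (W i) :=
    (hu i).JE_le (clampedCompetitor_nonneg (hu i).1 hw_nonneg) (hW i) hA.measurableSet h_bdd
      h_sub fun x hx => clampedCompetitor_eq_left (not_not.1 hx)
  have hA_lip {f : EuclideanSpace ℝ (Fin n) → ℝ} (hf : LocallyLipschitz f) :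
      ∃ C : ℝ≥0, LipschitzOnWith C f (closure A) :=
    hf.locallyLipschitzOn.exists_lipschitzOnWith_of_compact h_bdd.isCompact_closure
  obtain ⟨C, hC⟩ := exists_forall_lipschitzOnWith_clampedCompetitor
    (hu_lip _ h_bdd.isCompact_closure) (hA_lip hw) (hA_lip hv)
  calc JE A v ≤ liminf (fun i => JE A (u i)) l := JE_le_liminf hu_lip h_lim hA h_bdd
    _ ≤ liminf (fun i => JE A (W i)) l := liminf_le_liminf (.of_forall h_min)
    _ ≤ JE A w := liminf_JE_le_of_eventually_eq hA h_bdd hW hw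
      ⟨C, fun i => (hC i).mono subset_closure⟩
      fun x hx => eventually_clampedCompetitor_eq_right (h_lim x) hx

end Compactness

theorem stmt7_general {n : ℕ} {ι : Type*} {l : Filter ι} [l.NeBot] [l.IsCountablyGenerated]
    (Ω : Set (EuclideanSpace ℝ (Fin n))) (u : ι → EuclideanSpace ℝ (Fin n) → ℝ)
    (hmin : ∀ i, IsMinimizer Ω (u i))
    (hlip : ∀ K, IsCompact K → ∃ L : ℝ≥0, ∀ i, LipschitzOnWith L (u i) K)
    (v : EuclideanSpace ℝ (Fin n) → ℝ)
    (hconv : ∀ x, Tendsto (fun i => u i x) l (nhds (v x))) : IsMinimizer Ω v := by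
  have hv : LocallyLipschitz v := locallyLipschitz_of_forall_isCompact fun K hK =>
    (hlip K hK).imp fun _ hL => lipschitzOnWith_of_tendsto hL hconv
  refine ⟨fun x => ge_of_tendsto' (hconv x) fun i => (hmin i).1 x, hv,
    fun w hw_nonneg hw h_bdd h_sub c r h_ball => ?_⟩
  refine (JE_le_JE_iff_of_eqOn_compl hv hw (isOpen_ne_fun hw.continuous hv.continuous).measurableSet
    (fun x hx => (not_not.1 hx).symm) (subset_inter h_sub h_ball)
    (isBounded_ball.subset inter_subset_right)).2 ?_
  exact JE_le_of_isMinimizer_of_tendsto hmin hlip hconv hv hw_nonneg hw h_bdd h_sub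

/-- compactness of minimizers — a locally uniformly Lipschitz pointwise limit
of minimizers is a (nonnegative, locally Lipschitz) minimizer. -/
theorem stmt7 {n : ℕ} (hn : 2 ≤ n) (Ω : Set (EuclideanSpace ℝ (Fin n))) (hΩ : IsOpen Ω)
    (u : ℕ → EuclideanSpace ℝ (Fin n) → ℝ)
    (hmin : ∀ k, IsMinimizer Ω (u k))
    (hlip : ∀ K : Set (EuclideanSpace ℝ (Fin n)), IsCompact K →
      ∃ L : ℝ≥0, ∀ k, LipschitzOnWith L (u k) K)
    (v : EuclideanSpace ℝ (Fin n) → ℝ)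
    (hconv : ∀ x, Tendsto (fun k => u k x) atTop (nhds (v x))) :
    IsMinimizer Ω v :=
  stmt7_general Ω u hmin hlip v hconv
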